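/- arXiv:1705.07193 — 3 statements merged into one kernel-verified Lean document; each statement's English description precedes it below -/
import Mathlib

section
/- Orthogonality relation for Ramanujan sums: for all positive integers q, ℓ and every integer n, lim_{x→∞} (1/x)·Σ_{h ≤ x} c_q(n+h)·c_ℓ(h) equals c_ℓ(n) if q = ℓ and equals 0 if q ≠ ℓ. -/
/-- The Ramanujan sum `c_q(n) = ∑_{d ∣ gcd(q,n)} d · μ(q/d)`. -/
def ramanujanSum (q : ℕ) (n : ℤ) : ℤ :=
  ∑ d ∈ (Nat.gcd q n.natAbs).divisors, (d : ℤ) * ArithmeticFunction.moebius (q / d)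

/-!
By Möbius inversion, `c_q(n)` is the sum of the `n`-th powers of the primitive `q`-th roots of
unity, so `c_q(n + h) c_ℓ(h)` is a sum of terms `zⁿ (zw)ʰ` with `z` and `w` primitive of orders
`q` and `ℓ`. The sequence `h ↦ (zw)ʰ` has mean value `1` if `w = z⁻¹` and `0` otherwise. Since
`z⁻¹` is again primitive of order `q`, nothing survives unless `q = ℓ`, and then each `z`
contributes `zⁿ`.
-/

open Finset Filter Topology
open scoped ArithmeticFunction.Moebius

section MeanValue

/-- The sequence `f` has mean value `m`: its averages over `1, …, x` (so `f 0` is ignored) converge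
to `m`. -/
def HasMeanValue {E : Type*} [AddCommMonoid E] [Module ℝ E] [TopologicalSpace E]
    (f : ℕ → E) (m : E) : Prop :=
  Tendsto (fun x : ℕ => (x : ℝ)⁻¹ • ∑ h ∈ Icc 1 x, f h) atTop (𝓝 m)

theorem hasMeanValue_const {E : Type*} [AddCommMonoid E] [Module ℝ E] [TopologicalSpace E] (c : E) :
    HasMeanValue (fun _ => c) c := by
  refine tendsto_const_nhds.congr' ?_
  filter_upwards [eventually_ne_atTop 0] with x hx
  rw [sum_const, Nat.card_Icc, Nat.add_sub_cancel, ← Nat.cast_smul_eq_nsmul ℝ,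
    inv_smul_smul₀ (Nat.cast_ne_zero.2 hx)]

theorem HasMeanValue.map {E F : Type*} [AddCommMonoid E] [Module ℝ E] [TopologicalSpace E]
    [AddCommMonoid F] [Module ℝ F] [TopologicalSpace F] {f : ℕ → E} {m : E}
    (hf : HasMeanValue f m) (L : E →L[ℝ] F) : HasMeanValue (fun h => L (f h)) (L m) := by
  simpa only [HasMeanValue, Function.comp_def, map_smul, map_sum]
    using (L.continuous.tendsto m).comp hf

theorem hasMeanValue_finsetSum {ι E : Type*} [AddCommMonoid E] [Module ℝ E] [TopologicalSpace E]
    [ContinuousAdd E] {s : Finset ι} {f : ι → ℕ → E} {m : ι → E}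
    (hf : ∀ i ∈ s, HasMeanValue (f i) (m i)) :
    HasMeanValue (fun h => ∑ i ∈ s, f i h) (∑ i ∈ s, m i) := by
  refine (tendsto_finsetSum s hf).congr fun x => ?_
  rw [← smul_sum, sum_comm]

theorem hasMeanValue_zero_of_norm_sum_le {E : Type*} [SeminormedAddCommGroup E] [NormedSpace ℝ E]
    {f : ℕ → E} {C : ℝ} (hf : ∀ x, ‖∑ h ∈ Icc 1 x, f h‖ ≤ C) : HasMeanValue f 0 := by
  refine squeeze_zero_norm (fun x => ?_) (tendsto_const_div_atTop_nhds_zero_nat C)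
  rw [norm_smul, norm_inv, Real.norm_natCast, inv_mul_eq_div]
  gcongr
  exact hf x

theorem norm_sum_Icc_one_pow_le {𝕜 : Type*} [NormedDivisionRing 𝕜] {z : 𝕜} (hz : ‖z‖ ≤ 1)
    (hz1 : z ≠ 1) (x : ℕ) : ‖∑ h ∈ Icc 1 x, z ^ h‖ ≤ 2 / ‖z - 1‖ := by
  have hgeom : ∑ h ∈ Icc 1 x, z ^ h = (z ^ (x + 1) - z) / (z - 1) := by
    rw [← Ico_add_one_right_eq_Icc, geom_sum_Ico hz1 (Nat.le_add_left 1 x), pow_one]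
  rw [hgeom, norm_div]
  gcongr
  calc ‖z ^ (x + 1) - z‖ ≤ ‖z‖ ^ (x + 1) + ‖z‖ := norm_pow z (x + 1) ▸ norm_sub_le _ _
    _ ≤ 1 + 1 := add_le_add (pow_le_one₀ (norm_nonneg z) hz) hz
    _ = 2 := one_add_one_eq_two

theorem hasMeanValue_pow {𝕜 : Type*} [NormedDivisionRing 𝕜] [NormedAlgebra ℝ 𝕜] [DecidableEq 𝕜]
    {z : 𝕜} (hz : ‖z‖ ≤ 1) : HasMeanValue (fun h => z ^ h) (if z = 1 then 1 else 0) := by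
  split_ifs with hz1
  · simpa only [hz1, one_pow] using hasMeanValue_const (1 : 𝕜)
  · exact hasMeanValue_zero_of_norm_sum_le (norm_sum_Icc_one_pow_le hz hz1)

theorem hasMeanValue_sum_mul_pow_mul_sum_mul_pow {𝕜 : Type*} [NormedField 𝕜] [NormedAlgebra ℝ 𝕜]
    [DecidableEq 𝕜] {s t : Finset 𝕜} (hs : ∀ z ∈ s, ‖z‖ ≤ 1) (ht : ∀ w ∈ t, ‖w‖ ≤ 1)
    (a b : 𝕜 → 𝕜) :
    HasMeanValue (fun h => (∑ z ∈ s, a z * z ^ h) * ∑ w ∈ t, b w * w ^ h)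
      (∑ z ∈ s, ∑ w ∈ t, if z * w = 1 then a z * b w else 0) := by
  simp only [sum_mul_sum, mul_mul_mul_comm _ (_ ^ _), ← mul_pow]
  refine hasMeanValue_finsetSum fun z hz => hasMeanValue_finsetSum fun w hw => ?_
  have hzw : ‖z * w‖ ≤ 1 :=
    norm_mul z w ▸ mul_le_one₀ (hs z hz) (norm_nonneg w) (ht w hw)
  simpa using (hasMeanValue_pow hzw).map (ContinuousLinearMap.mul ℝ 𝕜 (a z * b w))

end MeanValue

section RootsOfUnity

theorem sum_nthRootsFinset_one {R M : Type*} [CommRing R] [IsDomain R] [AddCommMonoid M] {ζ : R}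
    {q : ℕ} (hζ : IsPrimitiveRoot ζ q) (f : R → M) :
    ∑ z ∈ Polynomial.nthRootsFinset q (1 : R), f z = ∑ i ∈ range q, f (ζ ^ i) := by
  classical
  rw [Polynomial.nthRootsFinset_def, Finset.sum, Multiset.toFinset_val,
    hζ.nthRoots_one_nodup.dedup, hζ.nthRoots_eq (one_pow q)]
  simp [Finset.sum]

theorem sum_nthRootsFinset_one_zpow {K : Type*} [Field K] {ζ : K} {q : ℕ}
    (hζ : IsPrimitiveRoot ζ q) (n : ℤ) :
    ∑ z ∈ Polynomial.nthRootsFinset q (1 : K), z ^ n = if (q : ℤ) ∣ n then (q : K) else 0 := by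
  have hgeom : ∑ z ∈ Polynomial.nthRootsFinset q (1 : K), z ^ n = ∑ i ∈ range q, (ζ ^ n) ^ i := by
    simp only [sum_nthRootsFinset_one hζ, ← zpow_natCast, zpow_comm]
  have hpow : (ζ ^ n) ^ q = 1 := by
    rw [← zpow_natCast, zpow_comm, zpow_natCast, hζ.pow_eq_one, one_zpow]
  rw [hgeom]
  split_ifs with hqn
  · simp [(hζ.zpow_eq_one_iff_dvd n).2 hqn]
  · rw [geom_sum_eq (mt (hζ.zpow_eq_one_iff_dvd n).1 hqn), hpow, sub_self, zero_div]

theorem sum_divisors_sum_primitiveRoots {R M : Type*} [CommRing R] [IsDomain R] [AddCommMonoid M]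
    (q : ℕ) (f : R → M) :
    ∑ d ∈ q.divisors, ∑ z ∈ primitiveRoots d R, f z =
      ∑ z ∈ Polynomial.nthRootsFinset q (1 : R), f z := by
  classical
  rw [IsPrimitiveRoot.nthRoots_one_eq_biUnion_primitiveRoots,
    sum_biUnion fun _ _ _ _ hab => IsPrimitiveRoot.disjoint hab]

theorem sum_primitiveRoots_ite_mul_eq_one {K M : Type*} [Field K] [DecidableEq K]
    [AddCommMonoid M] {z : K} {q : ℕ} (hz : IsPrimitiveRoot z q) (hq : 0 < q) (ℓ : ℕ) (c : M) :
    ∑ w ∈ primitiveRoots ℓ K, (if z * w = 1 then c else 0) = if q = ℓ then c else 0 := by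
  have hmem : z⁻¹ ∈ primitiveRoots ℓ K ↔ q = ℓ :=
    ⟨fun h => hz.inv.unique (isPrimitiveRoot_of_mem_primitiveRoots h),
      fun h => h ▸ (mem_primitiveRoots hq).2 hz.inv⟩
  simp only [mul_eq_one_iff_inv_eq₀ (hz.ne_zero hq.ne'), sum_ite_eq, hmem]

end RootsOfUnity

theorem ramanujanSum_eq_sum_divisors {q : ℕ} (hq : 0 < q) (n : ℤ) :
    ramanujanSum q n = ∑ d ∈ q.divisors, μ (q / d) * if (d : ℤ) ∣ n then (d : ℤ) else 0 := by
  have hdiv : (q.gcd n.natAbs).divisors = {d ∈ q.divisors | ((d : ℕ) : ℤ) ∣ n} := by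
    ext d
    simp [Nat.dvd_gcd_iff, hq.ne', Int.natCast_dvd]
  simp only [ramanujanSum, hdiv, sum_filter, mul_comm (μ _), ite_mul, zero_mul]

theorem ramanujanSum_eq_sum_primitiveRoots {K : Type*} [Field K] {ζ : K} {q : ℕ}
    (hζ : IsPrimitiveRoot ζ q) (hq : 0 < q) (n : ℤ) :
    (ramanujanSum q n : K) = ∑ z ∈ primitiveRoots q K, z ^ n := by
  have hsum : ∀ m > 0, m ∈ {m | m ∣ q} →
      ∑ d ∈ m.divisors, ∑ z ∈ primitiveRoots d K, z ^ n = if (m : ℤ) ∣ n then (m : K) else 0 := by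
    rintro m - ⟨k, hk⟩
    rw [sum_divisors_sum_primitiveRoots,
      sum_nthRootsFinset_one_zpow (hζ.pow hq (hk.trans (mul_comm m k)))]
  rw [← (ArithmeticFunction.sum_eq_iff_sum_mul_moebius_eq_on {m | m ∣ q}
      fun _ _ => dvd_trans).1 hsum q hq dvd_rfl,
    Nat.sum_divisorsAntidiagonal' (f := fun a b => (μ a : K) * if (b : ℤ) ∣ n then (b : K) else 0),
    ramanujanSum_eq_sum_divisors hq]
  push_cast
  rfl

theorem hasMeanValue_ramanujanSum_mul {q ℓ : ℕ} (hq : 0 < q) (hℓ : 0 < ℓ) (n : ℤ) :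
    HasMeanValue (fun h : ℕ => (ramanujanSum q (n + h) : ℂ) * ramanujanSum ℓ h)
      (if q = ℓ then (ramanujanSum ℓ n : ℂ) else 0) := by
  have hroots {k : ℕ} (hk : 0 < k) (m : ℤ) :=
    ramanujanSum_eq_sum_primitiveRoots (Complex.isPrimitiveRoot_exp k hk.ne') hk m
  have hnorm {k : ℕ} (hk : 0 < k) : ∀ z ∈ primitiveRoots k ℂ, ‖z‖ ≤ 1 := fun z hz =>
    (((mem_primitiveRoots hk).1 hz).norm'_eq_one hk.ne').le
  have hshift (h : ℕ) :
      (ramanujanSum q (n + h) : ℂ) = ∑ z ∈ primitiveRoots q ℂ, z ^ n * z ^ h := by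
    rw [hroots hq]
    refine sum_congr rfl fun z hz => ?_
    rw [zpow_add₀ (((mem_primitiveRoots hq).1 hz).ne_zero hq.ne'), zpow_natCast]
  have hlimit : (∑ z ∈ primitiveRoots q ℂ, ∑ w ∈ primitiveRoots ℓ ℂ,
      if z * w = 1 then z ^ n * 1 else 0) = if q = ℓ then (ramanujanSum ℓ n : ℂ) else 0 := by
    rw [sum_congr rfl fun z hz => sum_primitiveRoots_ite_mul_eq_one
      ((mem_primitiveRoots hq).1 hz) hq ℓ (z ^ n * 1)]
    split_ifs with hqℓ
    · simp only [mul_one, hqℓ, hroots hℓ]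
    · exact sum_const_zero
  rw [← hlimit]
  simpa only [hshift, hroots hℓ, zpow_natCast, one_mul] using
    hasMeanValue_sum_mul_pow_mul_sum_mul_pow (hnorm hq) (hnorm hℓ) (fun z => z ^ n) fun _ => 1

/-- orthogonality relation for Ramanujan sums: for all positive
integers `q`, `ℓ` and every integer `n`,
`lim_{x→∞} (1/x) ∑_{h ≤ x} c_q(n+h) c_ℓ(h)` equals `c_ℓ(n)` if `q = ℓ` and
equals `0` if `q ≠ ℓ`. -/
theorem ramanujanSum_orthogonality (q ℓ : ℕ) (hq : 0 < q) (hℓ : 0 < ℓ) (n : ℤ) :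
    Filter.Tendsto
      (fun x : ℕ => (1 / (x : ℝ)) *
        ∑ h ∈ Finset.Icc 1 x, (ramanujanSum q (n + (h : ℤ)) : ℝ) * (ramanujanSum ℓ (h : ℤ) : ℝ))
      Filter.atTop
      (nhds (if q = ℓ then (ramanujanSum ℓ n : ℝ) else 0)) := by
  have hmean := (hasMeanValue_ramanujanSum_mul hq hℓ n).map Complex.reCLM
  have hre : Complex.reCLM (if q = ℓ then (ramanujanSum ℓ n : ℂ) else 0) =
      if q = ℓ then (ramanujanSum ℓ n : ℝ) else 0 := by
    split_ifs <;> simp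
  simpa [HasMeanValue, hre] using hmean
end

section
/- Let f : ℕ → ℂ be a truncated divisor sum of range N, i.e. f(n) = Σ_{d | n, d ≤ N} f'(d), with Ramanujan coefficients 𝑓̂(q) = (1/q)·Σ_{n ≤ N/q} f'(qn)/n. Then the Eratosthenes transform is recovered by the inversion formula f'(d) = d·Σ_{j ≤ N/d} μ(j)·𝑓̂(dj) for every d ≤ N. -/
/-!
Put `g m = f' m / m`. The Ramanujan coefficients are then sums of `g` over multiples,
`f̂ q = ∑_{n ≤ N/q} g (q * n)`, and they are inverted by the dual form of Möbius inversion: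
collecting the terms of `∑_j μ j * f̂ (d * j)` according to the value `m = j * n` gives
`∑_{m ≤ N/d} (∑_{j ∣ m} μ j) * g (d * m)`, in which only `m = 1` survives.
-/

open Finset
open scoped ArithmeticFunction.Moebius

theorem sum_Icc_sum_Icc_div_eq_sum_sum_divisorsAntidiagonal {M : Type*} [AddCommMonoid M]
    (N : ℕ) (F : ℕ → ℕ → M) :
    ∑ j ∈ Icc 1 N, ∑ n ∈ Icc 1 (N / j), F j n =
      ∑ m ∈ Icc 1 N, ∑ x ∈ m.divisorsAntidiagonal, F x.1 x.2 := by
  rw [sum_sigma', sum_sigma']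
  refine sum_nbij' (fun p ↦ ⟨p.1 * p.2, p.1, p.2⟩) (fun p ↦ ⟨p.2.1, p.2.2⟩) ?_ ?_
    (fun _ _ ↦ rfl) ?_ (fun _ _ ↦ rfl)
  · rintro ⟨j, n⟩ h
    simp only [mem_sigma, mem_Icc, Nat.mem_divisorsAntidiagonal] at h ⊢
    obtain ⟨⟨hj, -⟩, hn, hnN⟩ := h
    have hpos : 0 < j * n := Nat.mul_pos hj hn
    exact ⟨⟨hpos, mul_comm n j ▸ (Nat.le_div_iff_mul_le hj).1 hnN⟩, trivial, hpos.ne'⟩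
  · rintro ⟨_, j, n⟩ h
    simp only [mem_sigma, mem_Icc, Nat.mem_divisorsAntidiagonal] at h ⊢
    obtain ⟨⟨hpos, hN⟩, rfl, -⟩ := h
    have hj : 0 < j := Nat.pos_of_mul_pos_right hpos
    have hn : 0 < n := Nat.pos_of_mul_pos_left hpos
    exact ⟨⟨hj, (Nat.le_mul_of_pos_right j hn).trans hN⟩, hn,
      (Nat.le_div_iff_mul_le hj).2 (mul_comm j n ▸ hN)⟩
  · rintro ⟨_, j, n⟩ h
    simp only [mem_sigma, Nat.mem_divisorsAntidiagonal] at h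
    obtain ⟨-, rfl, -⟩ := h
    rfl

theorem sum_divisors_moebius (n : ℕ) : ∑ j ∈ n.divisors, μ j = if n = 1 then 1 else 0 := by
  rw [← ArithmeticFunction.coe_mul_zeta_apply, ArithmeticFunction.moebius_mul_coe_zeta,
    ArithmeticFunction.one_apply]

section MoebiusInversion

variable {M : Type*} [AddCommGroup M] (g : ℕ → M)

theorem sum_divisorsAntidiagonal_moebius_smul (m : ℕ) :
    ∑ x ∈ m.divisorsAntidiagonal, μ x.1 • g (x.1 * x.2) = if m = 1 then g 1 else 0 := by
  calc ∑ x ∈ m.divisorsAntidiagonal, μ x.1 • g (x.1 * x.2)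
      = ∑ x ∈ m.divisorsAntidiagonal, μ x.1 • g m :=
        sum_congr rfl fun x hx ↦ by rw [(Nat.mem_divisorsAntidiagonal.1 hx).1]
    _ = (∑ j ∈ m.divisors, μ j) • g m := by
        rw [Nat.sum_divisorsAntidiagonal fun j _ ↦ μ j • g m, sum_smul]
    _ = if m = 1 then g 1 else 0 := by
        rw [sum_divisors_moebius]
        split_ifs with hm
        · rw [hm, one_smul]
        · exact zero_smul ℤ _

theorem sum_moebius_smul_sum_multiples {N : ℕ} (hN : 1 ≤ N) :
    ∑ j ∈ Icc 1 N, μ j • ∑ n ∈ Icc 1 (N / j), g (j * n) = g 1 := by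
  simp_rw [smul_sum]
  rw [sum_Icc_sum_Icc_div_eq_sum_sum_divisorsAntidiagonal N fun j n ↦ μ j • g (j * n)]
  simp_rw [sum_divisorsAntidiagonal_moebius_smul]
  rw [sum_ite_eq', if_pos (left_mem_Icc.2 hN)]

theorem sum_moebius_smul_sum_multiples_mul {N d : ℕ} (hd : 1 ≤ d) (hdN : d ≤ N) :
    ∑ j ∈ Icc 1 (N / d), μ j • ∑ n ∈ Icc 1 (N / (d * j)), g (d * j * n) = g d := by
  simpa only [Nat.div_div_eq_div_mul, mul_assoc, mul_one] using
    sum_moebius_smul_sum_multiples (fun m ↦ g (d * m)) (Nat.div_pos hdN hd)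

end MoebiusInversion

/-- The Ramanujan coefficient `f̂ q = (1 / q) * ∑_{n ≤ N / q} f' (q * n) / n` of the truncated
divisor sum of range `N` whose Eratosthenes transform is `f'`. It is a function of `f'` alone, so
the divisor sum itself is not an argument. -/
def ramanujanCoeff {K : Type*} [DivisionSemiring K] (N : ℕ) (f' : ℕ → K) (q : ℕ) : K :=
  (1 / (q : K)) * ∑ n ∈ Icc 1 (N / q), f' (q * n) / (n : K)

theorem ramanujanCoeff_eq_sum_multiples {K : Type*} [DivisionSemiring K]
    (N : ℕ) (f' : ℕ → K) (q : ℕ) :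
    ramanujanCoeff N f' q = ∑ n ∈ Icc 1 (N / q), f' (q * n) / ((q * n : ℕ) : K) := by
  rw [ramanujanCoeff, mul_sum]
  refine sum_congr rfl fun n _ ↦ ?_
  rw [one_div, ((Nat.cast_commute q _).inv_left₀).eq, Nat.cast_mul, div_eq_mul_inv, div_eq_mul_inv,
    mul_inv_rev, mul_assoc]

theorem eratosthenes_transform_inversion_general {K : Type*} [DivisionRing K] [CharZero K]
    {N : ℕ} (f' : ℕ → K) {d : ℕ} (hd : 1 ≤ d) (hdN : d ≤ N) :
    f' d = (d : K) * ∑ j ∈ Icc 1 (N / d), (μ j : K) * ramanujanCoeff N f' (d * j) := by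
  have hd₀ : (d : K) ≠ 0 := Nat.cast_ne_zero.2 (Nat.one_le_iff_ne_zero.1 hd)
  have inversion : ∑ j ∈ Icc 1 (N / d), (μ j : K) * ramanujanCoeff N f' (d * j) = f' d / d := by
    simp_rw [← zsmul_eq_mul, ramanujanCoeff_eq_sum_multiples]
    exact sum_moebius_smul_sum_multiples_mul (fun m ↦ f' m / (m : K)) hd hdN
  rw [inversion, Nat.cast_comm, div_mul_cancel₀ _ hd₀]

/-- let `f : ℕ → ℂ` be a truncated divisor sum of range `N`,
i.e. `f(n) = ∑_{d ∣ n, d ≤ N} f'(d)`, with Ramanujan coefficients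
`f̂(q) = (1/q) ∑_{n ≤ N/q} f'(qn)/n`.  Then the Eratosthenes transform is
recovered by `f'(d) = d ∑_{j ≤ N/d} μ(j) f̂(dj)` for every `d ≤ N`. -/
theorem eratosthenes_transform_inversion
    (N : ℕ) (hN : 0 < N) (f f' : ℕ → ℂ)
    (hf : ∀ n : ℕ, 0 < n → f n = ∑ d ∈ n.divisors.filter (· ≤ N), f' d)
    (d : ℕ) (hd : 1 ≤ d) (hdN : d ≤ N) :
    f' d = (d : ℂ) * ∑ j ∈ Finset.Icc 1 (N / d),
      (ArithmeticFunction.moebius j : ℂ) *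
        ((1 / ((d * j : ℕ) : ℂ)) *
          ∑ n ∈ Finset.Icc 1 (N / (d * j)), f' (d * j * n) / (n : ℂ)) := by
  exact eratosthenes_transform_inversion_general f' hd hdN
end

section
/- Let N be a positive integer, let f be a sieve function of range D and g a sieve function of range Q with D ≤ Q and DQ ≪ N. Then, uniformly in the shift h ≥ 0, C_{f,g}(N,h) = 𝔖_{f,g}(h)·N + O_ε((DQ)^{1+ε}) for every ε > 0. In particular, if DQ ≪ N^{1−δ} for some fixed δ > ε, this is an asymptotic formula. -/
/-- The Ramanujan coefficient `f̂(q) = ∑_{m ≤ Q, q ∣ m} f'(m)/m` of a sieve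
function of range `Q` with Eratosthenes transform `f'`. -/
noncomputable def rCoeff (Q : ℕ) (f' : ℕ → ℂ) (q : ℕ) : ℂ :=
  ∑ m ∈ (Finset.Icc 1 Q).filter (q ∣ ·), f' m / (m : ℂ)

/-- The singular series `𝔖_{f,g}(h) = ∑_{q ≥ 1} f̂(q) ĝ(q) c_q(h)`, for `f` of
range `D` and `g` of range `Q`. -/
noncomputable def singularSeries (D Q : ℕ) (f' g' : ℕ → ℂ) (h : ℕ) : ℂ :=
  ∑' q : ℕ, if 1 ≤ q then rCoeff D f' q * rCoeff Q g' q * (ramanujanSum q (h : ℤ) : ℂ) else 0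

/-! Interchanging sums,
`C_{f,g}(N,h) = ∑_{d ≤ D} ∑_{q ≤ Q} f'(d) g'(q) · #{n ≤ N : d ∣ n, q ∣ n + h}`. By the Chinese
remainder theorem the conditions on `n` are either contradictory (`gcd(d,q) ∤ h`) or define one
residue class modulo `lcm(d,q)`, so the count is `N` times a density, up to an error of at most `1`.
Since `∑_{l ∣ m} c_l(h) = m · [m ∣ h]`, the same weighted sum of densities is the singular series,
which leaves an error of at most `∑_{d ≤ D} |f'(d)| · ∑_{q ≤ Q} |g'(q)|`.
-/

section

open Finset

/-- The sieve function `n ↦ ∑_{d ∣ n, d ≤ Q} f'(d)` of range `Q` with Eratosthenes transform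
`f'`; values of `f'` beyond `Q` are ignored rather than required to vanish. -/
def sieveFunction (Q : ℕ) (f' : ℕ → ℂ) (n : ℕ) : ℂ :=
  ∑ d ∈ n.divisors with d ≤ Q, f' d

theorem filter_le_divisors {m : ℕ} (hm : m ≠ 0) (R : ℕ) :
    {d ∈ m.divisors | d ≤ R} = {d ∈ Icc 1 R | d ∣ m} := by
  ext d
  have hpos : d ∣ m → 1 ≤ d := fun hd => Nat.pos_of_dvd_of_pos hd hm.bot_lt
  simp only [mem_filter, mem_Icc, Nat.mem_divisors]
  tauto

theorem sieveFunction_eq_sum_Icc (Q : ℕ) (f' : ℕ → ℂ) {n : ℕ} (hn : n ≠ 0) :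
    sieveFunction Q f' n = ∑ d ∈ Icc 1 Q, if d ∣ n then f' d else 0 := by
  rw [sieveFunction, filter_le_divisors hn, sum_filter]

/-- The correlation `C_{f,g}(N,h) = ∑_{n ≤ N} f(n) g(n+h)`, with `n` starting from `1`. -/
def correlation (f g : ℕ → ℂ) (N h : ℕ) : ℂ :=
  ∑ n ∈ Icc 1 N, f n * g (n + h)

/-- The number of positive `n ≤ N` with `d ∣ n` and `q ∣ n + h`: the coefficient of `f'(d) g'(q)`
in the correlation of two sieve functions. -/
def jointDvdCount (N d q h : ℕ) : ℕ :=
  #{n ∈ Icc 1 N | d ∣ n ∧ q ∣ n + h}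

/-- The natural density of the `n` with `d ∣ n` and `q ∣ n + h`, for positive `d` and `q`, given by
its value from the Chinese remainder theorem. -/
noncomputable def jointDvdDensity (d q h : ℕ) : ℝ :=
  if d.gcd q ∣ h then (d.lcm q : ℝ)⁻¹ else 0

theorem correlation_sieveFunction (D Q : ℕ) (f' g' : ℕ → ℂ) (N h : ℕ) :
    correlation (sieveFunction D f') (sieveFunction Q g') N h =
      ∑ d ∈ Icc 1 D, ∑ q ∈ Icc 1 Q, f' d * g' q * jointDvdCount N d q h := by
  have hprod : ∀ n ∈ Icc 1 N, sieveFunction D f' n * sieveFunction Q g' (n + h) =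
      ∑ d ∈ Icc 1 D, ∑ q ∈ Icc 1 Q, if d ∣ n ∧ q ∣ n + h then f' d * g' q else 0 := by
    intro n hn
    have hn0 : n ≠ 0 := Nat.one_le_iff_ne_zero.1 (mem_Icc.1 hn).1
    rw [sieveFunction_eq_sum_Icc D f' hn0, sieveFunction_eq_sum_Icc Q g' (by omega), sum_mul_sum]
    simp only [ite_zero_mul_ite_zero]
  rw [correlation, sum_congr rfl hprod, sum_comm]
  refine sum_congr rfl fun d _ => ?_
  rw [sum_comm]
  refine sum_congr rfl fun q _ => ?_
  rw [← sum_filter, sum_const, nsmul_eq_mul, mul_comm, jointDvdCount]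

theorem abs_card_Ioc_filter_modEq_sub_le_one {a b r : ℕ} (hab : a ≤ b) (hr : 0 < r) (v : ℕ) :
    |(#{n ∈ Ioc a b | n ≡ v [MOD r]} : ℝ) - (b - a) / r| ≤ 1 := by
  set x : ℚ := (b - v) / r with hx
  set y : ℚ := (a - v) / r with hy
  have hyx : y ≤ x := by rw [hx, hy]; gcongr
  have hcard : (#{n ∈ Ioc a b | n ≡ v [MOD r]} : ℤ) = ⌊x⌋ - ⌊y⌋ := by
    rw [Nat.Ioc_filter_modEq_card a b hr, max_eq_left (sub_nonneg.2 (Int.floor_mono hyx))]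
  have hcardQ : (#{n ∈ Ioc a b | n ≡ v [MOD r]} : ℚ) = ⌊x⌋ - ⌊y⌋ := mod_cast hcard
  have hfract : (#{n ∈ Ioc a b | n ≡ v [MOD r]} : ℚ) - (b - a) / r = Int.fract y - Int.fract x := by
    rw [hcardQ, Int.fract, Int.fract, hx, hy]
    ring
  have hbound : |(#{n ∈ Ioc a b | n ≡ v [MOD r]} : ℚ) - (b - a) / r| ≤ (1 : ℚ) := by
    rw [hfract]
    exact abs_sub_le_of_nonneg_of_le (Int.fract_nonneg y) (Int.fract_lt_one y).le
      (Int.fract_nonneg x) (Int.fract_lt_one x).le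
  simpa only [Rat.cast_abs, Rat.cast_sub, Rat.cast_div, Rat.cast_natCast, Rat.cast_one] using
    (Rat.cast_le (K := ℝ)).2 hbound

theorem exists_dvd_and_dvd_add_of_gcd_dvd {d q h : ℕ} (hq : 0 < q) (hg : d.gcd q ∣ h) :
    ∃ v, d ∣ v ∧ q ∣ v + h := by
  -- `(q - 1) * h` stands for `-h` modulo `q`.
  have hneg : (q - 1) * h + h = q * h := by
    rw [← Nat.succ_mul, Nat.succ_eq_add_one, Nat.sub_add_cancel hq]
  have hcompat : 0 ≡ (q - 1) * h [MOD d.gcd q] :=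
    (Nat.modEq_zero_iff_dvd.2 (hg.mul_left _)).symm
  obtain ⟨v, hvd, hvq⟩ := Nat.chineseRemainder' hcompat
  refine ⟨v, Nat.modEq_zero_iff_dvd.1 hvd, ?_⟩
  rw [(hvq.add_right h).dvd_iff dvd_rfl, hneg]
  exact dvd_mul_right q h

theorem dvd_and_dvd_add_iff_modEq_lcm {d q h v : ℕ} (hd : d ∣ v) (hq : q ∣ v + h) (n : ℕ) :
    d ∣ n ∧ q ∣ n + h ↔ n ≡ v [MOD d.lcm q] := by
  constructor
  · rintro ⟨hdn, hqn⟩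
    have hmod_d : n ≡ v [MOD d] :=
      (Nat.modEq_zero_iff_dvd.2 hdn).trans (Nat.modEq_zero_iff_dvd.2 hd).symm
    have hmod_q : n + h ≡ v + h [MOD q] :=
      (Nat.modEq_zero_iff_dvd.2 hqn).trans (Nat.modEq_zero_iff_dvd.2 hq).symm
    exact Nat.mod_lcm hmod_d (hmod_q.add_right_cancel' h)
  · intro hn
    exact ⟨(hn.dvd_iff (Nat.dvd_lcm_left d q)).2 hd,
      ((hn.add_right h).dvd_iff (Nat.dvd_lcm_right d q)).2 hq⟩

theorem abs_jointDvdCount_sub_le_one (N h : ℕ) {d q : ℕ} (hd : 0 < d) (hq : 0 < q) :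
    |(jointDvdCount N d q h : ℝ) - N * jointDvdDensity d q h| ≤ 1 := by
  rw [jointDvdCount, jointDvdDensity]
  split_ifs with hg
  · obtain ⟨v, hdv, hqv⟩ := exists_dvd_and_dvd_add_of_gcd_dvd hq hg
    have hIcc : Icc 1 N = Ioc 0 N := rfl
    simpa only [hIcc, dvd_and_dvd_add_iff_modEq_lcm hdv hqv, Nat.cast_zero, sub_zero,
      div_eq_mul_inv] using
      abs_card_Ioc_filter_modEq_sub_le_one N.zero_le (Nat.lcm_pos hd hq) v
  · have hempty : {n ∈ Icc 1 N | d ∣ n ∧ q ∣ n + h} = ∅ := by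
      refine filter_eq_empty_iff.2 fun n _ ⟨hdn, hqn⟩ => hg ?_
      exact (Nat.dvd_add_right ((Nat.gcd_dvd_left d q).trans hdn)).1
        ((Nat.gcd_dvd_right d q).trans hqn)
    rw [hempty, card_empty, Nat.cast_zero, mul_zero, sub_zero, abs_zero]
    exact zero_le_one

theorem sum_divisors_ramanujanSum {m : ℕ} (hm : 0 < m) (h : ℤ) :
    ∑ l ∈ m.divisors, ramanujanSum l h = if (m : ℤ) ∣ h then (m : ℤ) else 0 := by
  suffices hinv : ∀ n > 0, ∑ x ∈ n.divisorsAntidiagonal, ArithmeticFunction.moebius x.1 *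
      (if (x.2 : ℤ) ∣ h then (x.2 : ℤ) else 0) = ramanujanSum n h from
    (ArithmeticFunction.sum_eq_iff_sum_mul_moebius_eq (f := fun l => ramanujanSum l h)
      (g := fun n => if (n : ℤ) ∣ h then (n : ℤ) else 0)).2 hinv m hm
  intro n hn
  have hdivisors : (n.gcd h.natAbs).divisors = n.divisors.filter fun d : ℕ => (d : ℤ) ∣ h := by
    ext d
    simp only [Nat.mem_divisors, mem_filter, Nat.dvd_gcd_iff, Nat.gcd_ne_zero_left hn.ne', hn.ne',
      Int.natCast_dvd, ne_eq, not_false_eq_true, and_true]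
  rw [Nat.sum_divisorsAntidiagonal'
    (f := fun a b => ArithmeticFunction.moebius a * if (b : ℤ) ∣ h then (b : ℤ) else 0),
    ramanujanSum, hdivisors, sum_filter]
  simp only [mul_comm (ArithmeticFunction.moebius _), ite_mul, zero_mul]

theorem rCoeff_eq_zero_of_lt {Q q : ℕ} (f' : ℕ → ℂ) (hq : Q < q) : rCoeff Q f' q = 0 := by
  rw [rCoeff, filter_eq_empty_iff.2, sum_empty]
  intro m hm hqm
  rw [mem_Icc] at hm
  exact (Nat.le_of_dvd hm.1 hqm).not_gt (hm.2.trans_lt hq)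

theorem singularSeries_eq_sum_Icc (D Q : ℕ) (f' g' : ℕ → ℂ) (h : ℕ) :
    singularSeries D Q f' g' h =
      ∑ l ∈ Icc 1 D, rCoeff D f' l * rCoeff Q g' l * (ramanujanSum l h : ℂ) := by
  rw [singularSeries, tsum_eq_sum (s := Icc 1 D)]
  · exact sum_congr rfl fun l hl => if_pos (mem_Icc.1 hl).1
  · intro l hl
    split_ifs with hl1
    · have hDl : D < l := by simpa only [mem_Icc, hl1, true_and, not_le] using hl
      rw [rCoeff_eq_zero_of_lt f' hDl, zero_mul, zero_mul]
    · rfl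

theorem rCoeff_mul_rCoeff (D Q : ℕ) (f' g' : ℕ → ℂ) (l : ℕ) :
    rCoeff D f' l * rCoeff Q g' l =
      ∑ d ∈ Icc 1 D, ∑ q ∈ Icc 1 Q, if l ∣ d.gcd q then f' d * g' q / (d * q) else 0 := by
  simp only [rCoeff, sum_filter, sum_mul_sum, ite_zero_mul_ite_zero, div_mul_div_comm,
    Nat.dvd_gcd_iff]

theorem sum_ramanujanSum_div_eq_jointDvdDensity {d q R : ℕ} (h : ℕ) (hd : 0 < d)
    (hdR : d ≤ R) :
    (∑ l ∈ Icc 1 R with l ∣ d.gcd q, (ramanujanSum l h : ℝ)) / (d * q) = jointDvdDensity d q h := by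
  have hg : 0 < d.gcd q := Nat.gcd_pos_of_pos_left q hd
  have hdivisors : {l ∈ Icc 1 R | l ∣ d.gcd q} = (d.gcd q).divisors := by
    rw [← filter_le_divisors hg.ne', filter_eq_self]
    intro l hl
    exact (Nat.le_of_dvd hd ((Nat.dvd_of_mem_divisors hl).trans (Nat.gcd_dvd_left d q))).trans hdR
  have hgcd_lcm : (d * q : ℝ) = d.gcd q * d.lcm q := mod_cast (Nat.gcd_mul_lcm d q).symm
  rw [hdivisors, ← Int.cast_sum, sum_divisors_ramanujanSum hg, jointDvdDensity, hgcd_lcm]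
  simp only [Int.natCast_dvd_natCast]
  split_ifs
  · rw [Int.cast_natCast, div_mul_cancel_left₀ (mod_cast hg.ne')]
  · simp only [Int.cast_zero, zero_div]

theorem singularSeries_eq_sum_jointDvdDensity (D Q : ℕ) (f' g' : ℕ → ℂ) (h : ℕ) :
    singularSeries D Q f' g' h =
      ∑ d ∈ Icc 1 D, ∑ q ∈ Icc 1 Q, f' d * g' q * jointDvdDensity d q h := by
  simp only [singularSeries_eq_sum_Icc, rCoeff_mul_rCoeff, sum_mul, ite_mul, zero_mul]
  rw [sum_comm]
  refine sum_congr rfl fun d hd => ?_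
  rw [sum_comm]
  refine sum_congr rfl fun q _ => ?_
  rw [mem_Icc] at hd
  rw [← sum_filter, ← mul_sum, ← sum_ramanujanSum_div_eq_jointDvdDensity h hd.1 hd.2]
  push_cast
  ring

theorem norm_correlation_sub_singularSeries_le (D Q : ℕ) (f' g' : ℕ → ℂ) (N h : ℕ) :
    ‖correlation (sieveFunction D f') (sieveFunction Q g') N h - singularSeries D Q f' g' h * N‖ ≤
      (∑ d ∈ Icc 1 D, ‖f' d‖) * ∑ q ∈ Icc 1 Q, ‖g' q‖ := by
  have hdiff : correlation (sieveFunction D f') (sieveFunction Q g') N h -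
      singularSeries D Q f' g' h * N = ∑ d ∈ Icc 1 D, ∑ q ∈ Icc 1 Q,
        f' d * g' q * ((jointDvdCount N d q h - N * jointDvdDensity d q h : ℝ) : ℂ) := by
    simp only [correlation_sieveFunction, singularSeries_eq_sum_jointDvdDensity, sum_mul,
      ← sum_sub_distrib]
    push_cast
    simp only [mul_sub, mul_assoc, mul_comm (N : ℂ)]
  rw [hdiff, sum_mul_sum]
  refine norm_sum_le_of_le _ fun d hd => norm_sum_le_of_le _ fun q hq => ?_
  rw [norm_mul, norm_mul, Complex.norm_real, Real.norm_eq_abs]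
  exact mul_le_of_le_one_right (by positivity)
    (abs_jointDvdCount_sub_le_one N h (mem_Icc.1 hd).1 (mem_Icc.1 hq).1)

theorem sum_Icc_norm_le_mul_rpow {E : Type*} [SeminormedAddGroup E] {F : ℕ → E} {c ε : ℝ}
    (hε : 0 ≤ ε) (hF : ∀ n : ℕ, 1 ≤ n → ‖F n‖ ≤ c * (n : ℝ) ^ ε) (R : ℕ) :
    ∑ n ∈ Icc 1 R, ‖F n‖ ≤ c * (R : ℝ) ^ (1 + ε) := by
  have hc : 0 ≤ c := by simpa using (norm_nonneg (F 1)).trans (hF 1 le_rfl)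
  calc ∑ n ∈ Icc 1 R, ‖F n‖
      ≤ ∑ _n ∈ Icc 1 R, c * (R : ℝ) ^ ε := by
        refine sum_le_sum fun n hn => (hF n (mem_Icc.1 hn).1).trans ?_
        have hnR : (n : ℝ) ≤ R := mod_cast (mem_Icc.1 hn).2
        gcongr
    _ = c * (R : ℝ) ^ (1 + ε) := by
        rw [sum_const, Nat.card_Icc, Nat.add_sub_cancel, nsmul_eq_mul,
          Real.rpow_one_add' R.cast_nonneg (by positivity)]
        ring

theorem correlation_of_sieve_functions_general {f' g' : ℕ → ℂ} {a b ε : ℝ} (hε : 0 ≤ ε)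
    (hf' : ∀ q : ℕ, 1 ≤ q → ‖f' q‖ ≤ a * (q : ℝ) ^ ε)
    (hg' : ∀ q : ℕ, 1 ≤ q → ‖g' q‖ ≤ b * (q : ℝ) ^ ε) (N D Q h : ℕ) :
    ‖correlation (sieveFunction D f') (sieveFunction Q g') N h - singularSeries D Q f' g' h * N‖ ≤
      a * b * ((D : ℝ) * Q) ^ (1 + ε) := by
  have hf_sum := sum_Icc_norm_le_mul_rpow hε hf' D
  have hg_sum := sum_Icc_norm_le_mul_rpow hε hg' Q
  calc ‖correlation (sieveFunction D f') (sieveFunction Q g') N h -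
        singularSeries D Q f' g' h * N‖
      ≤ (∑ d ∈ Icc 1 D, ‖f' d‖) * ∑ q ∈ Icc 1 Q, ‖g' q‖ :=
        norm_correlation_sub_singularSeries_le D Q f' g' N h
    _ ≤ (a * (D : ℝ) ^ (1 + ε)) * (b * (Q : ℝ) ^ (1 + ε)) :=
        mul_le_mul hf_sum hg_sum (by positivity) (le_trans (by positivity) hf_sum)
    _ = a * b * ((D : ℝ) * Q) ^ (1 + ε) := by
        rw [Real.mul_rpow D.cast_nonneg Q.cast_nonneg]
        ring

end

/-- let `N` be a positive integer, `f` a sieve function of range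
`D` and `g` a sieve function of range `Q`, with `D ≤ Q` and `DQ ≪ N`.  Then,
uniformly in the shift `h ≥ 0`,
`C_{f,g}(N,h) = 𝔖_{f,g}(h) N + O_ε((DQ)^{1+ε})` for every `ε > 0`, where
`C_{f,g}(N,h) = ∑_{n ≤ N} f(n) g(n+h)`. -/
theorem correlation_of_sieve_functions
    (f' g' : ℕ → ℂ)
    (hf' : ∀ ε : ℝ, 0 < ε → ∃ c : ℝ, 0 < c ∧ ∀ q : ℕ, 1 ≤ q → ‖f' q‖ ≤ c * (q : ℝ) ^ ε)
    (hg' : ∀ ε : ℝ, 0 < ε → ∃ c : ℝ, 0 < c ∧ ∀ q : ℕ, 1 ≤ q → ‖g' q‖ ≤ c * (q : ℝ) ^ ε)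
    (ε : ℝ) (hε : 0 < ε) (A : ℝ) (hA : 0 < A) :
    ∃ C : ℝ, 0 < C ∧ ∀ N D Q h : ℕ, 0 < N → 0 < D → 0 < Q → D ≤ Q →
      ((D : ℝ) * Q ≤ A * N) →
      ‖(∑ n ∈ Finset.Icc 1 N,
            (∑ d ∈ n.divisors.filter (· ≤ D), f' d) *
              (∑ d ∈ (n + h).divisors.filter (· ≤ Q), g' d))
          - singularSeries D Q f' g' h * (N : ℂ)‖
        ≤ C * ((D : ℝ) * Q) ^ (1 + ε) := by
  obtain ⟨a, ha, hfa⟩ := hf' ε hε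
  obtain ⟨b, hb, hgb⟩ := hg' ε hε
  exact ⟨a * b, mul_pos ha hb, fun N D Q h _ _ _ _ _ =>
    correlation_of_sieve_functions_general hε.le hfa hgb N D Q h⟩
end
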